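/- Let A ∈ ℝ^{n×n} be nonsingular and 1 ≤ k < d(A). If (c̃, ṽ) ∈ ℝ^k × ℝ^n with ‖ṽ‖ = 1 solves the worst-case GMRES problem, i.e., f(c̃, ṽ) = max_{‖v‖=1} min_{c ∈ ℝ^k} f(c, v), then ṽ is a right singular vector of the matrix p(A; c̃): it satisfies p(A; c̃)ᵀ p(A; c̃) ṽ = f(c̃, ṽ) ṽ, with corresponding singular value σ = √(f(c̃, ṽ)). -/

import Mathlib

open Polynomial Matrix

/-- The Euclidean norm of a real vector. -/
noncomputable def euclNorm {ι : Type*} [Fintype ι] (v : ι → ℝ) : ℝ :=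
  Real.sqrt (∑ i, v i ^ 2)

/-- The Euclidean norm of a complex vector. -/
noncomputable def euclNormC {ι : Type*} [Fintype ι] (v : ι → ℂ) : ℝ :=
  Real.sqrt (∑ i, ‖v i‖ ^ 2)

/-- The Euclidean inner product of two real vectors. -/
noncomputable def edot {ι : Type*} [Fintype ι] (u v : ι → ℝ) : ℝ := ∑ i, u i * v i

/-- `p ∈ π_k`: real polynomials of degree at most `k` with value `1` at the origin. -/
def IsPik (k : ℕ) (p : Polynomial ℝ) : Prop := p.natDegree ≤ k ∧ p.eval 0 = 1

/-- `p ∈ π_{k,ℂ}`: complex polynomials of degree at most `k` with value `1` at the origin. -/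
def IsPikC (k : ℕ) (p : Polynomial ℂ) : Prop := p.natDegree ≤ k ∧ p.eval 0 = 1

/-- The `k`-th GMRES residual norm `min_{p ∈ π_k} ‖p(A)v‖`. -/
noncomputable def gmresVal {ι : Type*} [Fintype ι] [DecidableEq ι]
    (A : Matrix ι ι ℝ) (k : ℕ) (v : ι → ℝ) : ℝ :=
  sInf {s : ℝ | ∃ p : Polynomial ℝ, IsPik k p ∧ s = euclNorm ((Polynomial.aeval A p).mulVec v)}

/-- The `k`-th worst-case GMRES approximation `Ψ_k(A) = max_{‖v‖=1} min_{p ∈ π_k} ‖p(A)v‖`. -/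
noncomputable def Psi {ι : Type*} [Fintype ι] [DecidableEq ι]
    (A : Matrix ι ι ℝ) (k : ℕ) : ℝ :=
  sSup {r : ℝ | ∃ v : ι → ℝ, euclNorm v = 1 ∧ r = gmresVal A k v}

/-- `d(A)`: the degree of the minimal polynomial of `A`. -/
noncomputable def dA {ι : Type*} [Fintype ι] [DecidableEq ι] (A : Matrix ι ι ℝ) : ℕ :=
  (minpoly ℝ A).natDegree

/-- `d(A,b)`: the smallest degree of a nonzero polynomial `q` with `q(A)b = 0`. -/
noncomputable def dAb {ι : Type*} [Fintype ι] [DecidableEq ι]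
    (A : Matrix ι ι ℝ) (b : ι → ℝ) : ℕ :=
  sInf {d : ℕ | ∃ q : Polynomial ℝ, q ≠ 0 ∧ q.natDegree = d ∧ (Polynomial.aeval A q).mulVec b = 0}

/-- `r = GMRES(A,b,k)`: `r = p(A)b` for some `p ∈ π_k` minimizing `‖p(A)b‖` over `π_k`. -/
def IsGmresRes {ι : Type*} [Fintype ι] [DecidableEq ι]
    (A : Matrix ι ι ℝ) (k : ℕ) (b r : ι → ℝ) : Prop :=
  ∃ p : Polynomial ℝ, IsPik k p ∧ r = (Polynomial.aeval A p).mulVec b ∧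
    ∀ q : Polynomial ℝ, IsPik k q → euclNorm r ≤ euclNorm ((Polynomial.aeval A q).mulVec b)

/-- `p` is the `k`-th GMRES polynomial of `A` and `b`: `p ∈ π_k` minimizes `‖p(A)b‖`. -/
def IsGmresPoly {ι : Type*} [Fintype ι] [DecidableEq ι]
    (A : Matrix ι ι ℝ) (k : ℕ) (b : ι → ℝ) (p : Polynomial ℝ) : Prop :=
  IsPik k p ∧ ∀ q : Polynomial ℝ, IsPik k q →
    euclNorm ((Polynomial.aeval A p).mulVec b) ≤ euclNorm ((Polynomial.aeval A q).mulVec b)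

/-- The Krylov subspace `K_k(A,b) = span{b, Ab, …, A^{k-1}b}`. -/
noncomputable def krylov {ι : Type*} [Fintype ι] [DecidableEq ι]
    (A : Matrix ι ι ℝ) (k : ℕ) (b : ι → ℝ) : Submodule ℝ (ι → ℝ) :=
  Submodule.span ℝ (Set.range fun i : Fin k => (A ^ (i : ℕ)).mulVec b)

/-- `b` satisfies the cross equality for `A` and step `k`. -/
def CrossEq {ι : Type*} [Fintype ι] [DecidableEq ι]
    (A : Matrix ι ι ℝ) (k : ℕ) (b : ι → ℝ) : Prop :=
  ∀ r s : ι → ℝ, IsGmresRes A k b r → IsGmresRes Aᵀ k ((euclNorm r)⁻¹ • r) s →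
    b = (euclNorm s)⁻¹ • s

/-- The Krylov matrix `K(v) = [Av, A²v, …, A^k v]`. -/
noncomputable def Kmat {n : ℕ} (A : Matrix (Fin n) (Fin n) ℝ) (k : ℕ) (v : Fin n → ℝ) :
    Matrix (Fin n) (Fin k) ℝ :=
  Matrix.of fun i j => (A ^ ((j : ℕ) + 1)).mulVec v i

/-- `γ(v) = (K(v)ᵀK(v))⁻¹ K(v)ᵀ v`. -/
noncomputable def gammaVec {n : ℕ} (A : Matrix (Fin n) (Fin n) ℝ) (k : ℕ) (v : Fin n → ℝ) :
    Fin k → ℝ :=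
  ((Kmat A k v)ᵀ * Kmat A k v)⁻¹ *ᵥ ((Kmat A k v)ᵀ *ᵥ v)

/-- `g(v) = min_{c ∈ ℝ^k} ‖v - K(v)c‖²`. -/
noncomputable def gFun {n : ℕ} (A : Matrix (Fin n) (Fin n) ℝ) (k : ℕ) (v : Fin n → ℝ) : ℝ :=
  sInf {s : ℝ | ∃ c : Fin k → ℝ, s = euclNorm (v - Kmat A k v *ᵥ c) ^ 2}

/-- `p(z; c) = 1 - ∑_{j=1}^k c_j z^j`. -/
noncomputable def pPoly {k : ℕ} (c : Fin k → ℝ) : Polynomial ℝ :=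
  1 - ∑ j : Fin k, Polynomial.C (c j) * Polynomial.X ^ ((j : ℕ) + 1)

/-- `f(c,v) = ‖p(A;c)v‖²`. -/
noncomputable def fFun {n k : ℕ} (A : Matrix (Fin n) (Fin n) ℝ) (c : Fin k → ℝ)
    (v : Fin n → ℝ) : ℝ :=
  euclNorm ((Polynomial.aeval A (pPoly c)).mulVec v) ^ 2

/-- `F(c,v) = f(c,v)/(vᵀv)`. -/
noncomputable def FFun {n k : ℕ} (A : Matrix (Fin n) (Fin n) ℝ) (c : Fin k → ℝ)
    (v : Fin n → ℝ) : ℝ :=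
  fFun A c v / edot v v

/-- The Toh matrix `A(ω, ε)`. -/
noncomputable def tohMatrix (ω ε : ℝ) : Matrix (Fin 4) (Fin 4) ℝ :=
  !![1, ε, 0, 0; 0, -1, ω / ε, 0; 0, 0, 1, ε; 0, 0, 0, -1]

/-- `p` is a `k`-th worst-case GMRES polynomial of `A`. -/
def IsWCPoly {ι : Type*} [Fintype ι] [DecidableEq ι]
    (A : Matrix ι ι ℝ) (k : ℕ) (p : Polynomial ℝ) : Prop :=
  IsPik k p ∧ ∃ b : ι → ℝ, euclNorm b = 1 ∧
    (∀ q : Polynomial ℝ, IsPik k q →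
      euclNorm ((Polynomial.aeval A p).mulVec b) ≤ euclNorm ((Polynomial.aeval A q).mulVec b)) ∧
    euclNorm ((Polynomial.aeval A p).mulVec b) = Psi A k

/-- The spectral (Euclidean operator) norm of a real matrix. -/
noncomputable def specNorm {ι : Type*} [Fintype ι] (M : Matrix ι ι ℝ) : ℝ :=
  sSup {r : ℝ | ∃ v : ι → ℝ, euclNorm v = 1 ∧ r = euclNorm (M *ᵥ v)}

/-- The `k`-th ideal GMRES approximation `φ_k(A) = min_{p ∈ π_k} ‖p(A)‖`. -/
noncomputable def phiIdeal {ι : Type*} [Fintype ι] [DecidableEq ι]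
    (A : Matrix ι ι ℝ) (k : ℕ) : ℝ :=
  sInf {r : ℝ | ∃ p : Polynomial ℝ, IsPik k p ∧ r = specNorm (Polynomial.aeval A p)}

/-- Complexification of a real matrix. -/
noncomputable def matC {ι : Type*} (A : Matrix ι ι ℝ) : Matrix ι ι ℂ :=
  A.map fun x => (x : ℂ)

/-- Complexification of a real vector. -/
noncomputable def vecC {ι : Type*} (b : ι → ℝ) : ι → ℂ := fun i => (b i : ℂ)

/-- `Ψ_{k,ℂ,ℝ}(A)`: complex polynomials, real initial vectors. -/
noncomputable def PsiCR {ι : Type*} [Fintype ι] [DecidableEq ι]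
    (A : Matrix ι ι ℝ) (k : ℕ) : ℝ :=
  sSup {r : ℝ | ∃ b : ι → ℝ, euclNorm b = 1 ∧
    r = sInf {s : ℝ | ∃ p : Polynomial ℂ, IsPikC k p ∧
      s = euclNormC ((Polynomial.aeval (matC A) p).mulVec (vecC b))}}

/-- `Ψ_{k,ℂ,ℂ}(A)`: complex polynomials, complex initial vectors. -/
noncomputable def PsiCC {ι : Type*} [Fintype ι] [DecidableEq ι]
    (A : Matrix ι ι ℝ) (k : ℕ) : ℝ :=
  sSup {r : ℝ | ∃ b : ι → ℂ, euclNormC b = 1 ∧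
    r = sInf {s : ℝ | ∃ p : Polynomial ℂ, IsPikC k p ∧
      s = euclNormC ((Polynomial.aeval (matC A) p).mulVec b)}}

/-- `Ψ_{k,ℝ,ℂ}(A)`: real polynomials, complex initial vectors. -/
noncomputable def PsiRC {ι : Type*} [Fintype ι] [DecidableEq ι]
    (A : Matrix ι ι ℝ) (k : ℕ) : ℝ :=
  sSup {r : ℝ | ∃ b : ι → ℂ, euclNormC b = 1 ∧
    r = sInf {s : ℝ | ∃ p : Polynomial ℝ, IsPik k p ∧
      s = euclNormC ((Polynomial.aeval (matC A) (p.map (algebraMap ℝ ℂ))).mulVec b)}}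

/-- `φ_{k,ℝ,ℝ}(A)`. -/
noncomputable def phiRR {ι : Type*} [Fintype ι] [DecidableEq ι]
    (A : Matrix ι ι ℝ) (k : ℕ) : ℝ :=
  sInf {r : ℝ | ∃ p : Polynomial ℝ, IsPik k p ∧
    r = sSup {s : ℝ | ∃ b : ι → ℝ, euclNorm b = 1 ∧
      s = euclNorm ((Polynomial.aeval A p).mulVec b)}}

/-- `φ_{k,ℂ,ℝ}(A)`. -/
noncomputable def phiCR {ι : Type*} [Fintype ι] [DecidableEq ι]
    (A : Matrix ι ι ℝ) (k : ℕ) : ℝ :=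
  sInf {r : ℝ | ∃ p : Polynomial ℂ, IsPikC k p ∧
    r = sSup {s : ℝ | ∃ b : ι → ℝ, euclNorm b = 1 ∧
      s = euclNormC ((Polynomial.aeval (matC A) p).mulVec (vecC b))}}

/-- `φ_{k,ℝ,ℂ}(A)`. -/
noncomputable def phiRC {ι : Type*} [Fintype ι] [DecidableEq ι]
    (A : Matrix ι ι ℝ) (k : ℕ) : ℝ :=
  sInf {r : ℝ | ∃ p : Polynomial ℝ, IsPik k p ∧
    r = sSup {s : ℝ | ∃ b : ι → ℂ, euclNormC b = 1 ∧
      s = euclNormC ((Polynomial.aeval (matC A) (p.map (algebraMap ℝ ℂ))).mulVec b)}}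

/-- `φ_{k,ℂ,ℂ}(A)`. -/
noncomputable def phiCC {ι : Type*} [Fintype ι] [DecidableEq ι]
    (A : Matrix ι ι ℝ) (k : ℕ) : ℝ :=
  sInf {r : ℝ | ∃ p : Polynomial ℂ, IsPikC k p ∧
    r = sSup {s : ℝ | ∃ b : ι → ℂ, euclNormC b = 1 ∧
      s = euclNormC ((Polynomial.aeval (matC A) p).mulVec b)}}

open Filter Topology
open scoped RealInnerProductSpace

/-! For `v` near `ṽ` the least squares solution `γ(v)` depends continuously on `v`, and
`p(A; γ(v))ṽ` differs from `r = p(A; c̃)ṽ` by an element of the range of `K(ṽ)`, which is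
orthogonal to `r`. Expanding `‖p(A; γ(v))v‖² ≥ 2⟪r, p(A; γ(v))v⟫ - ‖r‖²` at `v = ṽ + th`,
comparing with the upper bound `‖r‖² ‖v‖²` given by maximality, and letting `t → 0⁺` yields
`⟪r, p(A; c̃)h⟫ ≤ ‖r‖² ⟪ṽ, h⟫` for every `h`, hence equality. Continuity of `γ` at `ṽ`
holds when `K(ṽ)` has full column rank; otherwise, `A` being invertible, some residual `p(A; c)ṽ`
vanishes, so `r = 0` by minimality and the claim is trivial. -/

section InnerProductSpace

variable {E F : Type*} [NormedAddCommGroup E] [InnerProductSpace ℝ E]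

lemma forall_norm_sub_le_iff_forall_inner_eq_zero [AddCommGroup F] [Module ℝ F]
    (T : F →ₗ[ℝ] E) (b : E) (c : F) :
    (∀ d, ‖b - T c‖ ≤ ‖b - T d‖) ↔ ∀ d, ⟪b - T c, T d⟫ = 0 := by
  have hbdd : BddBelow (Set.range fun w : LinearMap.range T => ‖b - w‖) :=
    ⟨0, Set.forall_mem_range.mpr fun _ => norm_nonneg _⟩
  have hproj := (LinearMap.range T).norm_eq_iInf_iff_real_inner_eq_zero
    (u := b) (LinearMap.mem_range_self T c)
  simp only [LinearMap.mem_range, forall_exists_index, forall_apply_eq_imp_iff] at hproj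
  rw [← hproj]
  constructor
  · intro hmin
    refine le_antisymm (le_ciInf ?_) (ciInf_le hbdd ⟨T c, LinearMap.mem_range_self T c⟩)
    rintro ⟨_, d, rfl⟩
    exact hmin d
  · intro heq d
    exact heq.le.trans (ciInf_le hbdd ⟨T d, LinearMap.mem_range_self T d⟩)

lemma two_mul_inner_sub_norm_sq_le (x y : E) : 2 * ⟪x, y⟫ - ‖x‖ ^ 2 ≤ ‖y‖ ^ 2 := by
  have h := norm_sub_sq_real x y
  linarith [sq_nonneg ‖x - y‖]

variable [NormedAddCommGroup F] [InnerProductSpace ℝ F] {N : E → E →ₗ[ℝ] F} {v : E} {μ : ℝ}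

lemma inner_map_le_of_eventually_norm_sq_le (hcont : ∀ h, ContinuousAt (fun w => N w h) v)
    (horth : ∀ w, ⟪N v v, N w v⟫ = ‖N v v‖ ^ 2) (heq : ‖N v v‖ ^ 2 = μ * ‖v‖ ^ 2)
    (hle : ∀ᶠ w in 𝓝 v, ‖N w w‖ ^ 2 ≤ μ * ‖w‖ ^ 2) (h : E) :
    ⟪N v v, N v h⟫ ≤ μ * ⟪v, h⟫ := by
  have hpath : Tendsto (fun t : ℝ => v + t • h) (𝓝[>] 0) (𝓝 v) := by
    have : ContinuousAt (fun t : ℝ => v + t • h) 0 := by fun_prop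
    simpa using this.tendsto.mono_left nhdsWithin_le_nhds
  have hlower : Tendsto (fun t : ℝ => ⟪N v v, N (v + t • h) h⟫) (𝓝[>] 0) (𝓝 ⟪N v v, N v h⟫) :=
    tendsto_const_nhds.inner ((hcont h).tendsto.comp hpath)
  have hupper : Tendsto (fun t : ℝ => μ * ⟪v, h⟫ + t * (μ * ‖h‖ ^ 2 / 2)) (𝓝[>] 0)
      (𝓝 (μ * ⟪v, h⟫)) := by
    have : ContinuousAt (fun t : ℝ => μ * ⟪v, h⟫ + t * (μ * ‖h‖ ^ 2 / 2)) 0 := by fun_prop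
    simpa using this.tendsto.mono_left nhdsWithin_le_nhds
  refine le_of_tendsto_of_tendsto hlower hupper ?_
  filter_upwards [hpath.eventually hle, self_mem_nhdsWithin] with t hbound (ht : 0 < t)
  have hdiv : 2 * t * ⟪N v v, N (v + t • h) h⟫
      ≤ 2 * t * (μ * ⟪v, h⟫ + t * (μ * ‖h‖ ^ 2 / 2)) := by
    have hexpand : ‖v + t • h‖ ^ 2 = ‖v‖ ^ 2 + 2 * (t * ⟪v, h⟫) + t ^ 2 * ‖h‖ ^ 2 := by
      rw [norm_add_sq_real, real_inner_smul_right, norm_smul, mul_pow, Real.norm_eq_abs, sq_abs]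
    have hconvex := (two_mul_inner_sub_norm_sq_le (N v v) _).trans hbound
    rw [map_add, map_smul, inner_add_right, real_inner_smul_right, horth, hexpand] at hconvex
    linear_combination hconvex - heq
  exact le_of_mul_le_mul_left hdiv (by positivity)

lemma inner_map_eq_of_eventually_norm_sq_le (hcont : ∀ h, ContinuousAt (fun w => N w h) v)
    (horth : ∀ w, ⟪N v v, N w v⟫ = ‖N v v‖ ^ 2) (heq : ‖N v v‖ ^ 2 = μ * ‖v‖ ^ 2)
    (hle : ∀ᶠ w in 𝓝 v, ‖N w w‖ ^ 2 ≤ μ * ‖w‖ ^ 2) (h : E) :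
    ⟪N v v, N v h⟫ = μ * ⟪v, h⟫ := by
  refine le_antisymm (inner_map_le_of_eventually_norm_sq_le hcont horth heq hle h) ?_
  have hneg := inner_map_le_of_eventually_norm_sq_le hcont horth heq hle (-h)
  rw [map_neg, inner_neg_right, inner_neg_right] at hneg
  linarith

end InnerProductSpace

section EuclNorm

variable {ι κ : Type*} [Fintype ι] [Fintype κ]

lemma euclNorm_eq_norm_toLp (v : ι → ℝ) : euclNorm v = ‖WithLp.toLp 2 v‖ := by
  simp only [euclNorm, EuclideanSpace.norm_eq, Real.norm_eq_abs, sq_abs]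

lemma euclNorm_nonneg (v : ι → ℝ) : 0 ≤ euclNorm v :=
  Real.sqrt_nonneg _

lemma continuous_euclNorm : Continuous (euclNorm : (ι → ℝ) → ℝ) := by
  unfold euclNorm
  fun_prop

lemma euclNorm_smul (s : ℝ) (v : ι → ℝ) : euclNorm (s • v) = |s| * euclNorm v := by
  simp only [euclNorm_eq_norm_toLp, WithLp.toLp_smul, norm_smul, Real.norm_eq_abs]

lemma inner_toLp_eq_dotProduct (v w : ι → ℝ) : ⟪WithLp.toLp 2 v, WithLp.toLp 2 w⟫ = v ⬝ᵥ w := by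
  rw [EuclideanSpace.inner_toLp_toLp, star_trivial, dotProduct_comm]

lemma transpose_mul_self_mulVec_eq_smul_of_eventually_euclNorm_sq_le
    {M : (ι → ℝ) → Matrix κ ι ℝ} {v : ι → ℝ} {μ : ℝ}
    (hcont : ∀ x, ContinuousAt (fun w => M w *ᵥ x) v)
    (horth : ∀ w, (M v *ᵥ v) ⬝ᵥ (M w *ᵥ v) = euclNorm (M v *ᵥ v) ^ 2)
    (heq : euclNorm (M v *ᵥ v) ^ 2 = μ * euclNorm v ^ 2)
    (hle : ∀ᶠ w in 𝓝 v, euclNorm (M w *ᵥ w) ^ 2 ≤ μ * euclNorm w ^ 2) :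
    ((M v)ᵀ * M v) *ᵥ v = μ • v := by
  classical
  let N (w : EuclideanSpace ℝ ι) : EuclideanSpace ℝ ι →ₗ[ℝ] EuclideanSpace ℝ κ :=
    toLpLin 2 2 (M w.ofLp)
  have hofLp : ContinuousAt (WithLp.ofLp : EuclideanSpace ℝ ι → ι → ℝ) (WithLp.toLp 2 v) :=
    (PiLp.continuous_ofLp 2 _).continuousAt
  have hN (w x : EuclideanSpace ℝ ι) : N w x = WithLp.toLp 2 (M w.ofLp *ᵥ x.ofLp) := rfl
  have hNcont (x : EuclideanSpace ℝ ι) : ContinuousAt (fun w => N w x) (WithLp.toLp 2 v) := by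
    simp only [hN]
    exact (PiLp.continuous_toLp 2 _).continuousAt.comp
      (ContinuousAt.comp (f := WithLp.ofLp) (hcont x.ofLp) hofLp)
  have hfirst (x : ι → ℝ) : ⟪N (WithLp.toLp 2 v) (WithLp.toLp 2 v),
      N (WithLp.toLp 2 v) (WithLp.toLp 2 x)⟫ = μ * ⟪WithLp.toLp 2 v, WithLp.toLp 2 x⟫ := by
    apply inner_map_eq_of_eventually_norm_sq_le hNcont
    · simpa only [hN, inner_toLp_eq_dotProduct, ← euclNorm_eq_norm_toLp] using
        fun w : EuclideanSpace ℝ ι => horth w.ofLp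
    · simpa only [hN, ← euclNorm_eq_norm_toLp] using heq
    · filter_upwards [hofLp.eventually hle] with w hw
      rwa [euclNorm_eq_norm_toLp, euclNorm_eq_norm_toLp] at hw
  refine dotProduct_eq _ _ fun x => ?_
  rw [← mulVec_mulVec, mulVec_transpose, ← dotProduct_mulVec, smul_dotProduct, smul_eq_mul,
    ← inner_toLp_eq_dotProduct, ← inner_toLp_eq_dotProduct v]
  exact hfirst x

lemma forall_euclNorm_sub_mulVec_le_iff (B : Matrix ι κ ℝ) (b : ι → ℝ) (c : κ → ℝ) :
    (∀ d, euclNorm (b - B *ᵥ c) ≤ euclNorm (b - B *ᵥ d)) ↔ Bᵀ *ᵥ (b - B *ᵥ c) = 0 := by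
  have hinner := forall_norm_sub_le_iff_forall_inner_eq_zero
    ((WithLp.linearEquiv 2 ℝ (ι → ℝ)).symm.toLinearMap ∘ₗ B.mulVecLin) (WithLp.toLp 2 b) c
  simp only [LinearMap.comp_apply, mulVecLin_apply, LinearEquiv.coe_coe,
    WithLp.coe_symm_linearEquiv, ← WithLp.toLp_sub, ← euclNorm_eq_norm_toLp,
    inner_toLp_eq_dotProduct, dotProduct_mulVec, ← mulVec_transpose] at hinner
  rw [hinner, dotProduct_eq_zero_iff]

lemma isUnit_transpose_mul_self_of_injective [DecidableEq κ] {B : Matrix ι κ ℝ}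
    (hB : Function.Injective B.mulVec) : IsUnit (Bᵀ * B) := by
  simpa only [conjTranspose_eq_transpose_of_trivial] using
    (PosDef.conjTranspose_mul_self B hB).isUnit

end EuclNorm

section ResidualPolynomials

variable {k : ℕ}

lemma coeff_pPoly_succ (c : Fin k → ℝ) (m : ℕ) :
    (pPoly c).coeff (m + 1) = if h : m < k then -c ⟨m, h⟩ else 0 := by
  simp only [pPoly, coeff_sub, coeff_one, finsetSum_coeff, coeff_C_mul_X_pow,
    Nat.add_right_cancel_iff, Nat.add_one_ne_zero, if_false, zero_sub]
  split_ifs with hm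
  · rw [Finset.sum_eq_single ⟨m, hm⟩ (fun j _ hj => if_neg fun h => hj (Fin.ext h.symm)) (by simp),
      if_pos rfl]
  · rw [Finset.sum_eq_zero fun j _ => if_neg (by omega), neg_zero]

lemma coeff_pPoly_zero (c : Fin k → ℝ) : (pPoly c).coeff 0 = 1 := by
  simp [pPoly, finsetSum_coeff]

lemma natDegree_pPoly_le (c : Fin k → ℝ) : (pPoly c).natDegree ≤ k := by
  rw [natDegree_le_iff_coeff_eq_zero]
  rintro (_ | m) hm
  · omega
  · rw [coeff_pPoly_succ, dif_neg (by omega)]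

lemma exists_pPoly_eq_of_isPik {p : ℝ[X]} (hp : IsPik k p) : ∃ c : Fin k → ℝ, pPoly c = p := by
  refine ⟨fun j => -p.coeff (j + 1), ?_⟩
  ext (_ | m)
  · rw [coeff_pPoly_zero, coeff_zero_eq_eval_zero, hp.2]
  · rw [coeff_pPoly_succ]
    split_ifs with hm
    · exact neg_neg _
    · exact (coeff_eq_zero_of_natDegree_lt (hp.1.trans_lt (by omega))).symm

lemma pPoly_injective : Function.Injective (pPoly : (Fin k → ℝ) → ℝ[X]) := by
  intro c d hcd
  ext j
  simpa [coeff_pPoly_succ] using congr_arg (coeff · (j + 1)) hcd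

lemma exists_isPik_aeval_mulVec_eq_zero {ι : Type*} [Fintype ι] [DecidableEq ι]
    {A : Matrix ι ι ℝ} (hA : IsUnit A) {v : ι → ℝ} {q : ℝ[X]} (hq : q ≠ 0)
    (hdeg : q.natDegree ≤ k) (hqv : aeval A q *ᵥ v = 0) :
    ∃ p : ℝ[X], IsPik k p ∧ aeval A p *ᵥ v = 0 := by
  obtain ⟨s, hqs, hs⟩ := exists_eq_pow_rootMultiplicity_mul_and_not_dvd q hq 0
  set m := q.rootMultiplicity 0
  rw [C_0, sub_zero] at hqs hs
  rw [X_dvd_iff, coeff_zero_eq_eval_zero] at hs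
  have hsv : aeval A s *ᵥ v = 0 := by
    refine mulVec_injective_of_isUnit (hA.pow m) ?_
    rw [mulVec_mulVec, mulVec_zero, ← hqv, hqs, map_mul, map_pow, aeval_X]
  have hsdeg : s.natDegree ≤ k := (natDegree_le_of_dvd ⟨X ^ m, by rw [hqs, mul_comm]⟩ hq).trans hdeg
  refine ⟨C (s.eval 0)⁻¹ * s, ⟨(natDegree_C_mul_le _ _).trans hsdeg, ?_⟩, ?_⟩
  · rw [eval_mul, eval_C, inv_mul_cancel₀ hs]
  · rw [map_mul, ← mulVec_mulVec, hsv, mulVec_zero]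

end ResidualPolynomials

section Gmres

variable {n k : ℕ} {A : Matrix (Fin n) (Fin n) ℝ}

lemma Kmat_mulVec (A : Matrix (Fin n) (Fin n) ℝ) (v : Fin n → ℝ) (c : Fin k → ℝ) :
    Kmat A k v *ᵥ c = ∑ j, c j • (A ^ ((j : ℕ) + 1)) *ᵥ v := by
  ext i
  simp only [Kmat, mulVec, dotProduct, of_apply, Finset.sum_apply, Pi.smul_apply, smul_eq_mul,
    mul_comm]

lemma aeval_pPoly_mulVec (A : Matrix (Fin n) (Fin n) ℝ) (c : Fin k → ℝ) (v : Fin n → ℝ) :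
    aeval A (pPoly c) *ᵥ v = v - Kmat A k v *ᵥ c := by
  simp only [Kmat_mulVec, pPoly, map_sub, map_one, map_sum, map_mul, map_pow, aeval_X, aeval_C,
    sub_mulVec, one_mulVec, sum_mulVec, ← Algebra.smul_def, smul_mulVec]

lemma Kmat_mulVec_injective (hA : IsUnit A) {v : Fin n → ℝ}
    (hv : ∀ c : Fin k → ℝ, aeval A (pPoly c) *ᵥ v ≠ 0) :
    Function.Injective (Kmat A k v).mulVec := by
  refine (injective_iff_map_eq_zero (Kmat A k v).mulVecLin).mpr fun d hd => ?_
  rw [mulVecLin_apply] at hd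
  by_contra hd0
  have hq : 1 - pPoly d ≠ 0 := by
    have hp0 : pPoly (0 : Fin k → ℝ) = 1 := by simp [pPoly]
    rw [← hp0]
    exact sub_ne_zero.mpr (pPoly_injective.ne (Ne.symm hd0))
  have hdeg : (1 - pPoly d).natDegree ≤ k := by
    simpa using natDegree_sub_le_of_le (natDegree_one.le.trans k.zero_le) (natDegree_pPoly_le d)
  have hqv : aeval A (1 - pPoly d) *ᵥ v = 0 := by
    rw [map_sub, map_one, sub_mulVec, one_mulVec, aeval_pPoly_mulVec, hd, sub_zero, sub_self]
  obtain ⟨p, hp, hpv⟩ := exists_isPik_aeval_mulVec_eq_zero hA hq hdeg hqv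
  obtain ⟨c, rfl⟩ := exists_pPoly_eq_of_isPik hp
  exact hv c hpv

lemma transpose_Kmat_mulVec_residual_eq_zero_iff {v : Fin n → ℝ} {c : Fin k → ℝ}
    (h : IsUnit ((Kmat A k v)ᵀ * Kmat A k v)) :
    (Kmat A k v)ᵀ *ᵥ (v - Kmat A k v *ᵥ c) = 0 ↔ c = gammaVec A k v := by
  have hdet := (isUnit_iff_isUnit_det _).mp h
  rw [mulVec_sub, mulVec_mulVec, sub_eq_zero, gammaVec]
  constructor
  · intro hnormal
    rw [hnormal, mulVec_mulVec, nonsing_inv_mul _ hdet, one_mulVec]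
  · rintro rfl
    rw [mulVec_mulVec, mul_nonsing_inv _ hdet, one_mulVec]

lemma forall_fFun_le_iff_eq_gammaVec {v : Fin n → ℝ} {c : Fin k → ℝ}
    (h : IsUnit ((Kmat A k v)ᵀ * Kmat A k v)) :
    (∀ d : Fin k → ℝ, fFun A c v ≤ fFun A d v) ↔ c = gammaVec A k v := by
  rw [← transpose_Kmat_mulVec_residual_eq_zero_iff h, ← forall_euclNorm_sub_mulVec_le_iff]
  simp only [fFun, aeval_pPoly_mulVec]
  exact forall_congr' fun d => sq_le_sq₀ (euclNorm_nonneg _) (euclNorm_nonneg _)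

lemma continuous_Kmat (A : Matrix (Fin n) (Fin n) ℝ) (k : ℕ) : Continuous (Kmat A k) :=
  continuous_matrix fun i _ =>
    (continuous_apply i).comp (continuous_const.matrix_mulVec continuous_id)

lemma continuous_transpose_Kmat_mul_Kmat (A : Matrix (Fin n) (Fin n) ℝ) (k : ℕ) :
    Continuous fun v => (Kmat A k v)ᵀ * Kmat A k v :=
  (continuous_Kmat A k).matrix_transpose.matrix_mul (continuous_Kmat A k)

lemma eventually_isUnit_transpose_Kmat_mul_Kmat {v : Fin n → ℝ}
    (h : IsUnit ((Kmat A k v)ᵀ * Kmat A k v)) :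
    ∀ᶠ w in 𝓝 v, IsUnit ((Kmat A k w)ᵀ * Kmat A k w) := by
  simp only [isUnit_iff_isUnit_det, isUnit_iff_ne_zero] at h ⊢
  exact (continuous_transpose_Kmat_mul_Kmat A k).matrix_det.continuousAt.eventually_ne h

lemma continuousAt_gammaVec {v : Fin n → ℝ} (h : IsUnit ((Kmat A k v)ᵀ * Kmat A k v)) :
    ContinuousAt (gammaVec A k) v := by
  have hdet : ContinuousAt Ring.inverse ((Kmat A k v)ᵀ * Kmat A k v).det := by
    obtain ⟨u, hu⟩ := (isUnit_iff_isUnit_det _).mp h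
    exact hu ▸ NormedRing.inverse_continuousAt u
  have hinv : ContinuousAt (fun w => ((Kmat A k w)ᵀ * Kmat A k w)⁻¹) v :=
    (continuousAt_matrix_inv _ hdet).comp (f := fun w => (Kmat A k w)ᵀ * Kmat A k w)
      (continuous_transpose_Kmat_mul_Kmat A k).continuousAt
  have hrhs : Continuous fun w => (Kmat A k w)ᵀ *ᵥ w :=
    (continuous_Kmat A k).matrix_transpose.matrix_mulVec continuous_id
  exact (continuous_fst.matrix_mulVec continuous_snd).continuousAt.comp
    (hinv.prodMk hrhs.continuousAt)

lemma continuousAt_residual_gammaVec {v : Fin n → ℝ}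
    (h : IsUnit ((Kmat A k v)ᵀ * Kmat A k v)) (x : Fin n → ℝ) :
    ContinuousAt (fun w => aeval A (pPoly (gammaVec A k w)) *ᵥ x) v := by
  simp only [aeval_pPoly_mulVec]
  exact continuousAt_const.sub
    ((continuous_const.matrix_mulVec continuous_id).continuousAt.comp (continuousAt_gammaVec h))

lemma dotProduct_residual_gammaVec {v : Fin n → ℝ} (h : IsUnit ((Kmat A k v)ᵀ * Kmat A k v))
    (c : Fin k → ℝ) :
    (aeval A (pPoly (gammaVec A k v)) *ᵥ v) ⬝ᵥ (aeval A (pPoly c) *ᵥ v)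
      = fFun A (gammaVec A k v) v := by
  have horth (e : Fin k → ℝ) : (v - Kmat A k v *ᵥ gammaVec A k v) ⬝ᵥ (Kmat A k v *ᵥ e) = 0 := by
    rw [dotProduct_mulVec, ← mulVec_transpose,
      (transpose_Kmat_mulVec_residual_eq_zero_iff h).mpr rfl, zero_dotProduct]
  rw [fFun, euclNorm_eq_norm_toLp, ← real_inner_self_eq_norm_sq, inner_toLp_eq_dotProduct]
  simp only [aeval_pPoly_mulVec]
  rw [dotProduct_sub, dotProduct_sub, horth, horth]

lemma fFun_eq_zero_iff {c : Fin k → ℝ} {v : Fin n → ℝ} :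
    fFun A c v = 0 ↔ aeval A (pPoly c) *ᵥ v = 0 := by
  rw [fFun, sq_eq_zero_iff, euclNorm_eq_norm_toLp, norm_eq_zero, WithLp.toLp_eq_zero]

lemma fFun_smul (c : Fin k → ℝ) (s : ℝ) (v : Fin n → ℝ) :
    fFun A c (s • v) = s ^ 2 * fFun A c v := by
  rw [fFun, fFun, mulVec_smul, euclNorm_smul, mul_pow, sq_abs]

lemma eventually_exists_fFun_le_mul_sq {v : Fin n → ℝ} (hv : euclNorm v = 1) {μ : ℝ}
    (hmax : ∀ᶠ w in 𝓝 v, euclNorm w = 1 → ∃ c : Fin k → ℝ, fFun A c w ≤ μ) :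
    ∀ᶠ w in 𝓝 v, ∃ c : Fin k → ℝ, fFun A c w ≤ μ * euclNorm w ^ 2 := by
  have hv0 : euclNorm v ≠ 0 := hv ▸ one_ne_zero
  have hnormalize : Tendsto (fun w : Fin n → ℝ => (euclNorm w)⁻¹ • w) (𝓝 v) (𝓝 v) := by
    have : ContinuousAt (fun w : Fin n → ℝ => (euclNorm w)⁻¹ • w) v :=
      (continuous_euclNorm.continuousAt.inv₀ hv0).smul continuousAt_id
    simpa [ContinuousAt, hv] using this
  filter_upwards [hnormalize.eventually hmax, continuous_euclNorm.continuousAt.eventually_ne hv0]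
    with w hw hw0
  have hw1 : euclNorm ((euclNorm w)⁻¹ • w) = 1 := by
    rw [euclNorm_smul, abs_of_nonneg (inv_nonneg.mpr (euclNorm_nonneg w)), inv_mul_cancel₀ hw0]
  obtain ⟨c, hc⟩ := hw hw1
  rw [fFun_smul, inv_pow, inv_mul_le_iff₀ (by positivity), mul_comm] at hc
  exact ⟨c, hc⟩

theorem worst_case_right_singular_vector_general (hA : IsUnit A) {c : Fin k → ℝ} {v : Fin n → ℝ}
    (hv : euclNorm v = 1) (hmin : ∀ d : Fin k → ℝ, fFun A c v ≤ fFun A d v)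
    (hmax : ∀ᶠ w in 𝓝 v, euclNorm w = 1 → ∃ d : Fin k → ℝ, fFun A d w ≤ fFun A c v) :
    ((aeval A (pPoly c))ᵀ * aeval A (pPoly c)) *ᵥ v = fFun A c v • v := by
  by_cases hzero : fFun A c v = 0
  · rw [hzero, ← mulVec_mulVec, fFun_eq_zero_iff.mp hzero, mulVec_zero, zero_smul]
  have hres (d : Fin k → ℝ) : aeval A (pPoly d) *ᵥ v ≠ 0 := fun hd =>
    hzero (le_antisymm (fFun_eq_zero_iff.mpr hd ▸ hmin d) (sq_nonneg _))
  have hgram := isUnit_transpose_mul_self_of_injective (Kmat_mulVec_injective hA hres)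
  obtain rfl := (forall_fFun_le_iff_eq_gammaVec hgram).mp hmin
  refine transpose_mul_self_mulVec_eq_smul_of_eventually_euclNorm_sq_le
    (M := fun w => aeval A (pPoly (gammaVec A k w))) (continuousAt_residual_gammaVec hgram)
    (fun w => dotProduct_residual_gammaVec hgram _) (by rw [hv, one_pow, mul_one, fFun]) ?_
  filter_upwards [eventually_isUnit_transpose_Kmat_mul_Kmat hgram,
    eventually_exists_fFun_le_mul_sq hv hmax] with w hw ⟨d, hd⟩
  exact ((forall_fFun_le_iff_eq_gammaVec hw).mpr rfl d).trans hd

end Gmres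

/-- If `(c̃, ṽ)` with `‖ṽ‖ = 1` solves the worst-case GMRES problem
`max_{‖v‖=1} min_c f(c,v)`, then `ṽ` is a right singular vector of `p(A;c̃)`:
`p(A;c̃)ᵀ p(A;c̃) ṽ = f(c̃,ṽ) ṽ`. -/
theorem worst_case_right_singular_vector {n : ℕ} (A : Matrix (Fin n) (Fin n) ℝ)
    (hA : IsUnit A) (k : ℕ) (hk1 : 1 ≤ k) (hk2 : k < dA A)
    (ct : Fin k → ℝ) (vt : Fin n → ℝ) (hvt : euclNorm vt = 1)
    (hmin : ∀ c : Fin k → ℝ, fFun A ct vt ≤ fFun A c vt)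
    (hmax : ∀ v : Fin n → ℝ, euclNorm v = 1 → ∃ c : Fin k → ℝ, fFun A c v ≤ fFun A ct vt) :
    ((Polynomial.aeval A (pPoly ct))ᵀ * Polynomial.aeval A (pPoly ct)) *ᵥ vt
      = fFun A ct vt • vt :=
  worst_case_right_singular_vector_general hA hvt hmin (.of_forall hmax)
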